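/- (Gromov–Milman isoperimetric inequality.) Let X = (ℝ^{n+1}, ‖·‖) be a normed space with nondecreasing modulus of convexity δ, extended by δ(t) = 0 for t < 0. Set θ_n = 1 − (1/2)^{1/(n−1)} and a(ε) = δ(ε/8 − θ_n). Then for every Borel set A ⊆ S(X) with μ(A) ≥ 1/2 and every ε > 0, μ(A + ε) ≥ 1 − e^{−a(ε)·n}. -/

import Mathlib

open MeasureTheory Set

/-- The unit sphere of the norm `N` on `ℝ^{n+1}`. -/
def unitSphere {n : ℕ} (N : (Fin (n + 1) → ℝ) → ℝ) : Set (Fin (n + 1) → ℝ) :=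
  {x | N x = 1}

/-- The cone `{t • a : a ∈ A, 0 ≤ t ≤ 1}` over a subset `A` of the unit sphere. -/
def coneOf {n : ℕ} (A : Set (Fin (n + 1) → ℝ)) : Set (Fin (n + 1) → ℝ) :=
  {p | ∃ a ∈ A, ∃ t : ℝ, 0 ≤ t ∧ t ≤ 1 ∧ p = t • a}

/-- The conical probability measure of a subset `A` of the unit sphere of the norm `N`. -/
noncomputable def conicalMeasure {n : ℕ} (N : (Fin (n + 1) → ℝ) → ℝ)
    (A : Set (Fin (n + 1) → ℝ)) : ENNReal :=
  volume (coneOf A) / volume {x | N x ≤ 1}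

/-- The (closed) `ε`-neighborhood of `Y` inside the unit sphere of the norm `N`,
for the distance `d(x,y) = N (x - y)`. -/
noncomputable def sphNbhd {n : ℕ} (N : (Fin (n + 1) → ℝ) → ℝ)
    (Y : Set (Fin (n + 1) → ℝ)) (ε : ℝ) : Set (Fin (n + 1) → ℝ) :=
  {x | N x = 1 ∧ sInf ((fun y => N (x - y)) '' Y) ≤ ε}

/-- `θ_n = 1 - (1/2)^{1/(n-1)}`. -/
noncomputable def thetaGM (n : ℕ) : ℝ := 1 - (1 / 2 : ℝ) ^ ((1 : ℝ) / ((n : ℝ) - 1))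

open scoped ENNReal Pointwise

/-- One-dimensional Brunn–Minkowski inequality, in midpoint form. -/
lemma volume_add_volume_le_of_midpoint_mem {A B S : Set ℝ} (hA : MeasurableSet A)
    (hB : MeasurableSet B) (hA' : A.Nonempty) (hB' : B.Nonempty)
    (h : ∀ x ∈ A, ∀ y ∈ B, (2 : ℝ)⁻¹ • (x + y) ∈ S) :
    volume A + volume B ≤ 2 * volume S := by
  have compact_case : ∀ K ⊆ A, IsCompact K → K.Nonempty → ∀ L ⊆ B, IsCompact L → L.Nonempty →
      volume K + volume L ≤ 2 * volume S := by
    intro K hKA hK hK0 L hLB hL hL0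
    obtain ⟨a, haK, ha⟩ := hK.exists_isGreatest hK0
    obtain ⟨b, hbL, hb⟩ := hL.exists_isLeast hL0
    have hU : ((fun x => x + b) '' K) ∪ ((fun y => a + y) '' L) ⊆ (2 : ℝ) • S := by
      rintro z (⟨x, hx, rfl⟩ | ⟨y, hy, rfl⟩)
      · exact ⟨_, h x (hKA hx) b (hLB hbL), by simp⟩
      · exact ⟨_, h a (hKA haK) y (hLB hy), by simp⟩
    have hmL : MeasurableSet ((fun y => a + y) '' L) :=
      (hL.image (by fun_prop)).measurableSet
    have hdisj : AEDisjoint volume ((fun x => x + b) '' K) ((fun y => a + y) '' L) := by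
      refine measure_mono_null (t := {a + b}) ?_ (by simp)
      rintro z ⟨⟨x, hx, rfl⟩, ⟨y, hy, hxy⟩⟩
      have h1 := ha hx
      have h2 := hb hy
      simp only [mem_singleton_iff] at hxy ⊢
      linarith
    calc volume K + volume L
        = volume ((fun x => x + b) '' K) + volume ((fun y => a + y) '' L) := by simp
      _ = volume (((fun x => x + b) '' K) ∪ ((fun y => a + y) '' L)) :=
        (measure_union₀ hmL.nullMeasurableSet hdisj).symm
      _ ≤ volume ((2 : ℝ) • S) := measure_mono hU
      _ = 2 * volume S := by rw [Measure.addHaar_smul]; simp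
  have approx : ∀ C : Set ℝ, MeasurableSet C → C.Nonempty →
      volume C ≤ ⨆ (K : Set ℝ) (_ : K ⊆ C ∧ IsCompact K ∧ K.Nonempty), volume K := by
    intro C hC hC'
    rw [hC.measure_eq_iSup_isCompact]
    refine iSup_le fun K => iSup_le fun hKC => iSup_le fun hK => ?_
    rcases K.eq_empty_or_nonempty with rfl | hK0
    · simp
    · exact le_iSup₂_of_le K ⟨hKC, hK, hK0⟩ le_rfl
  refine (add_le_add (approx A hA hA') (approx B hB hB')).trans ?_
  have single : ∀ C : Set ℝ, C.Nonempty → ∃ K, K ⊆ C ∧ IsCompact K ∧ K.Nonempty :=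
    fun C ⟨c, hc⟩ => ⟨{c}, by simpa, isCompact_singleton, singleton_nonempty c⟩
  exact ENNReal.biSup_add_biSup_le' (single A hA') (single B hB')
    fun K hK L hL => compact_case K hK.1 hK.2.1 hK.2.2 L hL.1 hL.2.1 hL.2.2

lemma lintegral_eq_lintegral_meas_lt_of_le_one {α : Type*} [MeasurableSpace α] (μ : Measure α)
    {f : α → ℝ≥0∞} (hf : Measurable f) (hf1 : ∀ x, f x ≤ 1) :
    ∫⁻ x, f x ∂μ = ∫⁻ t in Ioo (0 : ℝ) 1, μ {x | ENNReal.ofReal t < f x} := by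
  have htop : ∀ x, f x ≠ ∞ := fun x => ne_top_of_le_ne_top ENNReal.one_ne_top (hf1 x)
  have hcake := lintegral_eq_lintegral_meas_lt μ (f := fun x => (f x).toReal)
    (Filter.Eventually.of_forall fun x => ENNReal.toReal_nonneg) hf.ennreal_toReal.aemeasurable
  simp only [ENNReal.ofReal_toReal (htop _)] at hcake
  rw [hcake, ← Ioo_union_Ici_eq_Ioi zero_lt_one, lintegral_union measurableSet_Ici
    (Set.disjoint_left.2 fun x hx hx' => not_lt.2 hx' hx.2)]
  have hzero : ∫⁻ t in Ici (1 : ℝ), μ {a | t < (f a).toReal} = 0 := by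
    rw [setLIntegral_congr_fun (g := fun _ => 0) measurableSet_Ici, lintegral_zero]
    intro t ht
    have : {a | t < (f a).toReal} = ∅ := by
      ext a
      have := ENNReal.toReal_mono ENNReal.one_ne_top (hf1 a)
      simp only [ENNReal.toReal_one] at this
      simpa using this.trans ht
    simp [this]
  rw [hzero, add_zero]
  refine setLIntegral_congr_fun measurableSet_Ioo fun t ht => ?_
  simp only [ENNReal.ofReal_lt_iff_lt_toReal ht.1.le (htop _)]

lemma four_mul_le_add_sq_ennreal (a b : ℝ≥0∞) : 4 * (a * b) ≤ (a + b) ^ 2 := by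
  rcases eq_or_ne a ∞ with rfl | ha
  · simp
  rcases eq_or_ne b ∞ with rfl | hb
  · simp
  lift a to NNReal using ha
  lift b to NNReal using hb
  norm_cast
  have := four_mul_le_sq_add a b
  rwa [← mul_assoc]

/-- The midpoint Prékopa–Leindler inequality holds for the measure space `E`. -/
def PrekopaLeindler (E : Type*) [MeasureSpace E] [AddCommGroup E] [Module ℝ E] : Prop :=
  ∀ f g h : E → ℝ≥0∞, Measurable f → Measurable g → Measurable h →
    (∀ x y, f x * g y ≤ h ((2 : ℝ)⁻¹ • (x + y)) ^ 2) →
    (∫⁻ x, f x) * (∫⁻ x, g x) ≤ (∫⁻ x, h x) ^ 2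

lemma lintegral_add_le_of_iSup_eq_one {f g h : ℝ → ℝ≥0∞} (hf : Measurable f) (hg : Measurable g)
    (hh : Measurable h) (hfgh : ∀ x y, f x * g y ≤ h ((2 : ℝ)⁻¹ • (x + y)) ^ 2)
    (hf1 : ⨆ x, f x = 1) (hg1 : ⨆ x, g x = 1) :
    (∫⁻ x, f x) + (∫⁻ x, g x) ≤ 2 * ∫⁻ x, h x := by
  have hmin : ∫⁻ x, min (h x) 1 ≤ ∫⁻ x, h x := lintegral_mono fun x => min_le_left _ _
  refine le_trans ?_ (mul_le_mul_right hmin 2)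
  rw [lintegral_eq_lintegral_meas_lt_of_le_one volume hf fun x => hf1 ▸ le_iSup f x,
    lintegral_eq_lintegral_meas_lt_of_le_one volume hg fun x => hg1 ▸ le_iSup g x,
    lintegral_eq_lintegral_meas_lt_of_le_one volume (hh.min measurable_const)
      fun x => min_le_right _ _, ← lintegral_const_mul' _ _ (by simp)]
  have hanti : Antitone fun t : ℝ => volume {x | ENNReal.ofReal t < f x} := fun s t hst =>
    measure_mono fun x hx => (ENNReal.ofReal_le_ofReal hst).trans_lt hx
  rw [← lintegral_add_left hanti.measurable]
  refine setLIntegral_mono' measurableSet_Ioo fun t ht => ?_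
  have ht1 : ENNReal.ofReal t < 1 := by simpa using ht.2
  refine volume_add_volume_le_of_midpoint_mem (measurableSet_lt measurable_const hf)
    (measurableSet_lt measurable_const hg) ?_ ?_ ?_
  · exact lt_iSup_iff.1 (hf1 ▸ ht1)
  · exact lt_iSup_iff.1 (hg1 ▸ ht1)
  · intro x hx y hy
    refine lt_min ?_ ht1
    refine lt_of_not_ge fun hle => not_le.2 (ENNReal.mul_lt_mul hx hy) ?_
    rw [← sq]
    exact (hfgh x y).trans (pow_le_pow_left₀ zero_le hle 2)

lemma lintegral_mul_lintegral_le_of_bounded {f g h : ℝ → ℝ≥0∞} (hf : Measurable f)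
    (hg : Measurable g) (hh : Measurable h)
    (hfgh : ∀ x y, f x * g y ≤ h ((2 : ℝ)⁻¹ • (x + y)) ^ 2)
    (hf1 : ⨆ x, f x ≠ ∞) (hg1 : ⨆ x, g x ≠ ∞) :
    (∫⁻ x, f x) * (∫⁻ x, g x) ≤ (∫⁻ x, h x) ^ 2 := by
  set F := ⨆ x, f x with hF
  set G := ⨆ x, g x with hG
  rcases eq_or_ne F 0 with hF0 | hF0
  · have : ∀ x, f x = 0 := by simpa [hF] using hF0
    simp [this]
  rcases eq_or_ne G 0 with hG0 | hG0
  · have : ∀ x, g x = 0 := by simpa [hG] using hG0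
    simp [this]
  set c : ℝ≥0∞ := (F * G) ^ (1 / 2 : ℝ) with hc
  have hcsq : c ^ 2 = F * G := by
    rw [hc, ← ENNReal.rpow_natCast, ← ENNReal.rpow_mul]
    simp
  have hFG0 : F * G ≠ 0 := mul_ne_zero hF0 hG0
  have hFGtop : F * G ≠ ∞ := ENNReal.mul_ne_top hf1 hg1
  have key := lintegral_add_le_of_iSup_eq_one (f := fun x => F⁻¹ * f x) (g := fun x => G⁻¹ * g x)
    (h := fun x => c⁻¹ * h x) (hf.const_mul _) (hg.const_mul _) (hh.const_mul _)
    (fun x y => by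
      rw [mul_pow, ← ENNReal.inv_pow, hcsq, ENNReal.mul_inv (.inl hF0) (.inl hf1), mul_mul_mul_comm]
      gcongr
      exact hfgh x y)
    (by rw [← ENNReal.mul_iSup, ENNReal.inv_mul_cancel hF0 hf1])
    (by rw [← ENNReal.mul_iSup, ENNReal.inv_mul_cancel hG0 hg1])
  rw [lintegral_const_mul _ hf, lintegral_const_mul _ hg, lintegral_const_mul _ hh] at key
  have hsq := (four_mul_le_add_sq_ennreal _ _).trans (pow_le_pow_left₀ zero_le key 2)
  rw [mul_pow, mul_pow, ← ENNReal.inv_pow, hcsq, mul_mul_mul_comm,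
    ← ENNReal.mul_inv (.inl hF0) (.inl hf1), show (2 : ℝ≥0∞) ^ 2 = 4 by norm_num,
    ENNReal.mul_le_mul_iff_right (by simp) (by simp),
    ENNReal.mul_le_mul_iff_right (by simpa using hFGtop) (by simpa using hFG0)] at hsq
  exact hsq

lemma lintegral_eq_iSup_lintegral_min_natCast {α : Type*} [MeasurableSpace α] (μ : Measure α)
    {f : α → ℝ≥0∞} (hf : Measurable f) :
    ∫⁻ x, f x ∂μ = ⨆ k : ℕ, ∫⁻ x, min (f x) k ∂μ := by
  rw [← lintegral_iSup (fun k => hf.min measurable_const)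
    fun k l hkl x => min_le_min_left _ (by exact_mod_cast hkl)]
  refine lintegral_congr fun x => ?_
  rw [← inf_iSup_eq, ENNReal.iSup_natCast, inf_top_eq]

lemma prekopaLeindler_real : PrekopaLeindler ℝ := by
  intro f g h hf hg hh hfgh
  rw [lintegral_eq_iSup_lintegral_min_natCast _ hf, lintegral_eq_iSup_lintegral_min_natCast _ hg,
    ENNReal.iSup_mul]
  refine iSup_le fun k => ?_
  rw [ENNReal.mul_iSup]
  refine iSup_le fun l => ?_
  refine lintegral_mul_lintegral_le_of_bounded (hf.min measurable_const) (hg.min measurable_const)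
    hh (fun x y => (mul_le_mul' (min_le_left _ _) (min_le_left _ _)).trans (hfgh x y)) ?_ ?_
  · exact ne_top_of_le_ne_top (ENNReal.natCast_ne_top k) (iSup_le fun x => min_le_right _ _)
  · exact ne_top_of_le_ne_top (ENNReal.natCast_ne_top l) (iSup_le fun x => min_le_right _ _)

lemma PrekopaLeindler.prod {E F : Type*} [MeasureSpace E] [AddCommGroup E] [Module ℝ E]
    [MeasureSpace F] [AddCommGroup F] [Module ℝ F] [SFinite (volume : Measure F)]
    (hE : PrekopaLeindler E) (hF : PrekopaLeindler F) : PrekopaLeindler (E × F) := by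
  intro f g h hf hg hh hfgh
  rw [Measure.volume_eq_prod, lintegral_prod _ hf.aemeasurable, lintegral_prod _ hg.aemeasurable,
    lintegral_prod _ hh.aemeasurable]
  refine hE _ _ _ hf.lintegral_prod_right' hg.lintegral_prod_right' hh.lintegral_prod_right'
    fun x y => ?_
  refine hF _ _ _ (hf.comp measurable_prodMk_left) (hg.comp measurable_prodMk_left)
    (hh.comp measurable_prodMk_left) fun z w => ?_
  exact hfgh (x, z) (y, w)

lemma PrekopaLeindler.of_measurePreserving {E F : Type*} [MeasureSpace E] [AddCommGroup E]
    [Module ℝ E] [MeasureSpace F] [AddCommGroup F] [Module ℝ F] (hE : PrekopaLeindler E)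
    (e : E →ₗ[ℝ] F) (he : MeasurePreserving e) : PrekopaLeindler F := by
  intro f g h hf hg hh hfgh
  rw [← he.lintegral_comp hf, ← he.lintegral_comp hg, ← he.lintegral_comp hh]
  refine hE _ _ _ (hf.comp he.measurable) (hg.comp he.measurable) (hh.comp he.measurable)
    fun x y => ?_
  simpa using hfgh (e x) (e y)

/-- The **Prékopa–Leindler inequality** in `ℝⁿ`, in midpoint form. -/
lemma prekopaLeindler_pi (n : ℕ) : PrekopaLeindler (Fin n → ℝ) := by
  induction n with
  | zero =>
    intro f g h hf hg hh hfgh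
    have := hfgh default default
    rw [Subsingleton.elim ((2 : ℝ)⁻¹ • ((default : Fin 0 → ℝ) + default)) default] at this
    simpa [volume_pi, Measure.pi_of_empty _ default, lintegral_dirac] using this
  | succ n ih =>
    refine (prekopaLeindler_real.prod ih).of_measurePreserving
      (Fin.consLinearEquiv ℝ (fun _ : Fin (n + 1) => ℝ)).toLinearMap ?_
    have hcoe : ⇑(Fin.consLinearEquiv ℝ (fun _ : Fin (n + 1) => ℝ)).toLinearMap =
        (MeasurableEquiv.piFinSuccAbove (fun _ : Fin (n + 1) => ℝ) 0).symm := by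
      ext x i
      simp [MeasurableEquiv.piFinSuccAbove_symm_apply, Fin.insertNthEquiv]
    rw [hcoe]
    exact (volume_preserving_piFinSuccAbove (fun _ : Fin (n + 1) => ℝ) 0).symm

/-- The **Brunn–Minkowski inequality** in `ℝⁿ`, in multiplicative midpoint form. -/
lemma volume_mul_volume_le_of_midpoint_mem {n : ℕ} {A B S : Set (Fin n → ℝ)}
    (hA : MeasurableSet A) (hB : MeasurableSet B) (hS : MeasurableSet S)
    (h : ∀ x ∈ A, ∀ y ∈ B, (2 : ℝ)⁻¹ • (x + y) ∈ S) :
    volume A * volume B ≤ volume S ^ 2 := by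
  have := prekopaLeindler_pi n (A.indicator 1) (B.indicator 1) (S.indicator 1)
    (measurable_one.indicator hA) (measurable_one.indicator hB) (measurable_one.indicator hS)
    fun x y => by
      by_cases hx : x ∈ A <;> by_cases hy : y ∈ B <;>
        simp_all [indicator_of_mem, indicator_of_notMem]
  simpa [lintegral_indicator_one, hA, hB, hS] using this

section Norm

variable {n : ℕ} {N : (Fin (n + 1) → ℝ) → ℝ}

lemma continuous_of_seminorm_axioms (hNsmul : ∀ (a : ℝ) (x), N (a • x) = |a| * N x)
    (hNadd : ∀ x y, N (x + y) ≤ N x + N y) : Continuous N :=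
  (Seminorm.of (𝕜 := ℝ) N hNadd hNsmul).convexOn.locallyLipschitz.continuous

lemma nonneg_of_seminorm_axioms (hNsmul : ∀ (a : ℝ) (x), N (a • x) = |a| * N x)
    (hNadd : ∀ x y, N (x + y) ≤ N x + N y) (x : Fin (n + 1) → ℝ) : 0 ≤ N x :=
  apply_nonneg (Seminorm.of (𝕜 := ℝ) N hNadd hNsmul) x

lemma coneOf_mono {A B : Set (Fin (n + 1) → ℝ)} (h : A ⊆ B) : coneOf A ⊆ coneOf B :=
  fun _ ⟨a, ha, ht⟩ => ⟨a, h ha, ht⟩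

lemma coneOf_union (A B : Set (Fin (n + 1) → ℝ)) : coneOf (A ∪ B) = coneOf A ∪ coneOf B := by
  ext p
  simp only [coneOf, mem_union, mem_ofPred_eq, or_and_right, exists_or]

lemma coneOf_subset_unitBall (hNsmul : ∀ (a : ℝ) (x), N (a • x) = |a| * N x)
    {A : Set (Fin (n + 1) → ℝ)} (hA : A ⊆ unitSphere N) : coneOf A ⊆ {x | N x ≤ 1} := by
  rintro _ ⟨a, ha, t, ht0, ht1, rfl⟩
  have : N a = 1 := hA ha
  simpa [hNsmul, this, abs_of_nonneg ht0] using ht1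

lemma mem_coneOf_iff (hN0 : ∀ x, N x = 0 ↔ x = 0)
    (hNsmul : ∀ (a : ℝ) (x), N (a • x) = |a| * N x) (hNadd : ∀ x y, N (x + y) ≤ N x + N y)
    {A : Set (Fin (n + 1) → ℝ)} (hA : A ⊆ unitSphere N) {p : Fin (n + 1) → ℝ} (hp : p ≠ 0) :
    p ∈ coneOf A ↔ N p ≤ 1 ∧ (N p)⁻¹ • p ∈ A := by
  have hNp : N p ≠ 0 := fun h => hp ((hN0 p).1 h)
  constructor
  · intro h
    refine ⟨coneOf_subset_unitBall hNsmul hA h, ?_⟩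
    obtain ⟨a, ha, t, ht0, -, rfl⟩ := h
    have ht : t ≠ 0 := fun h => hp (by simp [h])
    have hNa : N a = 1 := hA ha
    simpa [hNsmul, hNa, abs_of_nonneg ht0, smul_smul, ht] using ha
  · rintro ⟨h1, h2⟩
    exact ⟨_, h2, N p, nonneg_of_seminorm_axioms hNsmul hNadd p, h1, by simp [smul_smul, hNp]⟩

lemma measurableSet_coneOf (hN0 : ∀ x, N x = 0 ↔ x = 0)
    (hNsmul : ∀ (a : ℝ) (x), N (a • x) = |a| * N x) (hNadd : ∀ x y, N (x + y) ≤ N x + N y)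
    {A : Set (Fin (n + 1) → ℝ)} (hAm : MeasurableSet A) (hA : A ⊆ unitSphere N) :
    MeasurableSet (coneOf A) := by
  have hNm : Measurable N := (continuous_of_seminorm_axioms hNsmul hNadd).measurable
  have hmeas : MeasurableSet ({p | N p ≤ 1} ∩ (fun p => (N p)⁻¹ • p) ⁻¹' A) :=
    (measurableSet_le hNm measurable_const).inter ((hNm.inv.smul measurable_id) hAm)
  rw [← measurableSet_insert (a := 0)]
  convert hmeas.insert 0 using 1
  ext p
  rcases eq_or_ne p 0 with rfl | hp
  · simp
  · simp [hp, mem_coneOf_iff hN0 hNsmul hNadd hA hp]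

lemma aedisjoint_coneOf (hN0 : ∀ x, N x = 0 ↔ x = 0)
    (hNsmul : ∀ (a : ℝ) (x), N (a • x) = |a| * N x) (hNadd : ∀ x y, N (x + y) ≤ N x + N y)
    {A B : Set (Fin (n + 1) → ℝ)} (hA : A ⊆ unitSphere N) (hB : B ⊆ unitSphere N)
    (hAB : Disjoint A B) : AEDisjoint volume (coneOf A) (coneOf B) := by
  refine measure_mono_null (t := {0}) ?_ (by simp)
  rintro p ⟨h1, h2⟩
  by_contra hp
  rw [mem_coneOf_iff hN0 hNsmul hNadd hA hp] at h1
  rw [mem_coneOf_iff hN0 hNsmul hNadd hB hp] at h2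
  exact Set.disjoint_left.1 hAB h1.2 h2.2

lemma unitBall_subset_coneOf (hN0 : ∀ x, N x = 0 ↔ x = 0)
    (hNsmul : ∀ (a : ℝ) (x), N (a • x) = |a| * N x) (hNadd : ∀ x y, N (x + y) ≤ N x + N y) :
    {x | N x ≤ 1} ⊆ insert 0 (coneOf (unitSphere N)) := by
  intro p hp
  rcases eq_or_ne p 0 with rfl | hp0
  · simp
  · have hNp : N p ≠ 0 := fun h => hp0 ((hN0 p).1 h)
    refine mem_insert_of_mem _ ((mem_coneOf_iff hN0 hNsmul hNadd subset_rfl hp0).2 ⟨hp, ?_⟩)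
    simp [unitSphere, hNsmul, abs_of_nonneg (nonneg_of_seminorm_axioms hNsmul hNadd p), hNp]

lemma volume_sublevel (hNsmul : ∀ (a : ℝ) (x), N (a • x) = |a| * N x) {r : ℝ} (hr : 0 < r) :
    volume {x | N x ≤ r} = ENNReal.ofReal (r ^ (n + 1)) * volume {x | N x ≤ 1} := by
  have : {x | N x ≤ r} = r • {x | N x ≤ 1} := by
    ext x
    rw [mem_smul_set_iff_inv_smul_mem₀ hr.ne']
    simp [hNsmul, abs_of_pos hr, inv_mul_le_iff₀ hr]
  rw [this, Measure.addHaar_smul, abs_of_pos (by positivity)]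
  simp

/-- A bound on midpoints of unit vectors propagates to the segments joining them to the origin. -/
lemma midpoint_smul_le (hNsmul : ∀ (a : ℝ) (x), N (a • x) = |a| * N x)
    (hNadd : ∀ x y, N (x + y) ≤ N x + N y) {a b : Fin (n + 1) → ℝ} (ha : N a = 1) (hb : N b = 1)
    {r : ℝ} (hr : 1 / 2 ≤ r) (hab : N ((2 : ℝ)⁻¹ • (a + b)) ≤ r) {s t : ℝ} (hs0 : 0 ≤ s)
    (hs1 : s ≤ 1) (ht0 : 0 ≤ t) (ht1 : t ≤ 1) :
    N ((2 : ℝ)⁻¹ • (s • a + t • b)) ≤ r := by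
  wlog hst : s ≤ t generalizing a b s t
  · rw [add_comm (s • a)]
    exact this hb ha (by rwa [add_comm b]) ht0 ht1 hs0 hs1 (le_of_not_ge hst)
  have hsplit : (2 : ℝ)⁻¹ • (s • a + t • b) =
      s • ((2 : ℝ)⁻¹ • (a + b)) + ((t - s) / 2) • b := by
    module
  rw [hsplit]
  refine (hNadd _ _).trans ?_
  rw [hNsmul s, hNsmul ((t - s) / 2), hb, abs_of_nonneg hs0, abs_of_nonneg (by linarith)]
  nlinarith

end Norm

lemma le_exp_mul_of_mul_le {a b V D : ℝ} {n : ℕ} (hV : 0 < V) (hb : 0 ≤ b) (ha : V / 2 ≤ a)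
    (hab : a + b ≤ V) (hD0 : 0 ≤ D) (hD1 : D ≤ 1)
    (hmul : a * b ≤ (max (1 - D) (1 / 2) ^ (n + 1) * V) ^ 2) :
    b ≤ Real.exp (-D * n) * V := by
  rcases le_or_gt (1 / 2) (Real.exp (-D * n)) with h | h
  · nlinarith
  have hb2 : b ≤ 2 * (max (1 - D) (1 / 2) ^ 2) ^ (n + 1) * V := by
    have : b * (V / 2) ≤ ((max (1 - D) (1 / 2) ^ 2) ^ (n + 1) * V) * V := by
      rw [← pow_mul, mul_comm 2, pow_mul]
      nlinarith
    nlinarith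
  refine hb2.trans (mul_le_mul_of_nonneg_right ?_ hV.le)
  have hexp : Real.exp (-D * n) = Real.exp (-D) ^ n := by
    rw [← Real.exp_nat_mul]; ring_nf
  rcases le_or_gt D (1 / 2) with hD | hD
  · rw [max_eq_left (by linarith)]
    have h1 : 1 - D ≤ Real.exp (-D) := by linarith [Real.add_one_le_exp (-D)]
    have h2 : ((1 - D) ^ 2) ^ (n + 1) ≤ Real.exp (-D * n) ^ 2 := by
      rw [← pow_mul, hexp, ← pow_mul]
      calc (1 - D) ^ (2 * (n + 1)) ≤ (1 - D) ^ (n * 2) :=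
            pow_le_pow_of_le_one (by linarith) (by linarith) (by omega)
        _ ≤ _ := pow_le_pow_left₀ (by linarith) h1 _
    nlinarith [Real.exp_pos (-D * n)]
  · rw [max_eq_right (by linarith), hexp]
    have h1 : (1 / 4 : ℝ) ≤ Real.exp (-D) := by
      have h3 : Real.exp 1 ≤ 4 := by linarith [Real.exp_one_lt_d9]
      calc (1 / 4 : ℝ) ≤ (Real.exp 1)⁻¹ := by
            rw [one_div]; exact inv_anti₀ (Real.exp_pos 1) h3
        _ = Real.exp (-1) := (Real.exp_neg 1).symm
        _ ≤ _ := Real.exp_le_exp.2 (by linarith)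
    have h2 := pow_le_pow_left₀ (by norm_num) h1 n
    rw [pow_succ]
    norm_num at h2 ⊢
    have : (0 : ℝ) ≤ (1 / 4) ^ n := by positivity
    linarith

lemma thetaGM_nonneg {n : ℕ} (hn : n ≠ 0) : 0 ≤ thetaGM n := by
  have : (1 : ℝ) ≤ n := by exact_mod_cast Nat.one_le_iff_ne_zero.2 hn
  exact sub_nonneg.2 (Real.rpow_le_one (by norm_num) (by norm_num)
    (div_nonneg zero_le_one (by linarith)))

/-- **Gromov–Milman isoperimetric inequality** for the unit sphere of a uniformly convex
normed space `X = (ℝ^{n+1}, N)` with nondecreasing modulus of convexity `δ` (extended by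
`δ(t) = 0` for `t < 0`): for every Borel set `A ⊆ S(X)` with `μ(A) ≥ 1/2` and every
`ε > 0`, `μ(A + ε) ≥ 1 - exp(-a(ε)·n)` where `a(ε) = δ(ε/8 - θ_n)`. -/
theorem gromov_milman_isoperimetric_inequality
    (n : ℕ)
    (N : (Fin (n + 1) → ℝ) → ℝ)
    (hN0 : ∀ x, N x = 0 ↔ x = 0)
    (hNsmul : ∀ (a : ℝ) (x), N (a • x) = |a| * N x)
    (hNadd : ∀ x y, N (x + y) ≤ N x + N y)
    (δ : ℝ → ℝ)
    (hδmono : Monotone δ)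
    (hδnonneg : ∀ t, 0 ≤ δ t)
    (hδneg : ∀ t : ℝ, t < 0 → δ t = 0)
    (hδmod : ∀ ε : ℝ, 0 < ε → ∀ x y, N x = 1 → N y = 1 → ε ≤ N (x - y) →
      N ((2 : ℝ)⁻¹ • (x + y)) ≤ 1 - δ ε)
    (A : Set (Fin (n + 1) → ℝ))
    (hAborel : MeasurableSet A)
    (hAsub : A ⊆ unitSphere N)
    (hAhalf : (1 / 2 : ENNReal) ≤ conicalMeasure N A) :
    ∀ ε : ℝ, 0 < ε →
      ENNReal.ofReal (1 - Real.exp (-(δ (ε / 8 - thetaGM n)) * n)) ≤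
        conicalMeasure N (sphNbhd N A ε) := by
  intro ε hε
  rcases eq_or_ne n 0 with rfl | hn
  · simp
  set D := δ (ε / 8 - thetaGM n)
  have hDε : D ≤ δ ε := hδmono (by linarith [thetaGM_nonneg hn])
  have hNcont := continuous_of_seminorm_axioms hNsmul hNadd
  have hNnonneg := nonneg_of_seminorm_axioms hNsmul hNadd
  set V := volume {x | N x ≤ 1} with hVdef
  set B : Set (Fin (n + 1) → ℝ) := unitSphere N ∩ ⋂ y ∈ A, {x | ε ≤ N (x - y)}
  have hBsub : B ⊆ unitSphere N := inter_subset_left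
  have hBmeas : MeasurableSet B :=
    ((isClosed_eq hNcont continuous_const).inter
      (isClosed_biInter fun y _ => isClosed_le continuous_const (by fun_prop))).measurableSet
  have hBA : ∀ x ∈ B, ∀ y ∈ A, ε ≤ N (x - y) := fun x hx y hy => mem_iInter₂.1 hx.2 y hy
  have hV0 : V ≠ 0 := by
    intro h
    have h0 : volume (coneOf A) = 0 := measure_mono_null (coneOf_subset_unitBall hNsmul hAsub) h
    simp [conicalMeasure, h0] at hAhalf
  have hVtop : V ≠ ∞ := by
    intro h
    simp [conicalMeasure, ← hVdef, h] at hAhalf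
  have hAV : volume (coneOf A) ≤ V := measure_mono (coneOf_subset_unitBall hNsmul hAsub)
  have hBV : volume (coneOf B) ≤ V := measure_mono (coneOf_subset_unitBall hNsmul hBsub)
  have hBtop : volume (coneOf B) ≠ ∞ := ne_top_of_le_ne_top hVtop hBV
  have hAtop : volume (coneOf A) ≠ ∞ := ne_top_of_le_ne_top hVtop hAV
  have hAne : A.Nonempty := by
    rw [nonempty_iff_ne_empty]
    rintro rfl
    simp [conicalMeasure, coneOf] at hAhalf
  have hVreal : 0 < V.toReal := ENNReal.toReal_pos hV0 hVtop
  have hdisj : Disjoint A B := Set.disjoint_left.2 fun x hxA hxB => by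
    have := hBA x hxB x hxA
    rw [sub_self, (hN0 0).2 rfl] at this
    exact not_le.2 hε this
  have hsum : volume (coneOf A) + volume (coneOf B) ≤ V := by
    rw [← measure_union₀ (measurableSet_coneOf hN0 hNsmul hNadd hBmeas hBsub).nullMeasurableSet
      (aedisjoint_coneOf hN0 hNsmul hNadd hAsub hBsub hdisj), ← coneOf_union]
    exact measure_mono (coneOf_subset_unitBall hNsmul (union_subset hAsub hBsub))
  have hcover : V ≤ volume (coneOf (sphNbhd N A ε)) + volume (coneOf B) := by
    have hsub : unitSphere N ⊆ sphNbhd N A ε ∪ B := by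
      intro x hx
      by_cases h : sInf ((fun y => N (x - y)) '' A) ≤ ε
      · exact .inl ⟨hx, h⟩
      · refine .inr ⟨hx, mem_iInter₂.2 fun y hy => (not_le.1 h).le.trans (csInf_le ?_ ⟨y, hy, rfl⟩)⟩
        exact ⟨0, by rintro _ ⟨z, -, rfl⟩; exact hNnonneg _⟩
    calc V ≤ volume (insert 0 (coneOf (unitSphere N))) :=
          measure_mono (unitBall_subset_coneOf hN0 hNsmul hNadd)
      _ = volume (coneOf (unitSphere N)) := measure_congr (insert_ae_eq_self _ _)
      _ ≤ volume (coneOf (sphNbhd N A ε) ∪ coneOf B) :=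
          measure_mono ((coneOf_mono hsub).trans (coneOf_union _ _).subset)
      _ ≤ _ := measure_union_le _ _
  have hbound : (volume (coneOf B)).toReal ≤ Real.exp (-D * n) * V.toReal := by
    rcases B.eq_empty_or_nonempty with hBe | ⟨x₀, hx₀⟩
    · have : coneOf B = ∅ := by simp [hBe, coneOf]
      simp only [this, measure_empty, ENNReal.toReal_zero]
      positivity
    have hmid : ∀ y ∈ A, ∀ x ∈ B, N ((2 : ℝ)⁻¹ • (y + x)) ≤ 1 - D := fun y hy x hx => by
      rw [add_comm y]
      exact (hδmod ε hε x y (hBsub hx) (hAsub hy) (hBA x hx y hy)).trans (by linarith)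
    obtain ⟨y₀, hy₀⟩ := hAne
    have hD1 : D ≤ 1 := by linarith [(hNnonneg _).trans (hmid y₀ hy₀ x₀ hx₀)]
    have hr : 0 < max (1 - D) (1 / 2) := lt_max_of_lt_right (by norm_num)
    have hBM := volume_mul_volume_le_of_midpoint_mem
      (measurableSet_coneOf hN0 hNsmul hNadd hAborel hAsub)
      (measurableSet_coneOf hN0 hNsmul hNadd hBmeas hBsub)
      (measurableSet_le hNcont.measurable (measurable_const (a := max (1 - D) (1 / 2)))) (by
        rintro _ ⟨a, ha, s, hs0, hs1, rfl⟩ _ ⟨b, hb, t, ht0, ht1, rfl⟩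
        exact midpoint_smul_le hNsmul hNadd (hAsub ha) (hBsub hb) (le_max_right _ _)
          ((hmid a ha b hb).trans (le_max_left _ _)) hs0 hs1 ht0 ht1)
    rw [volume_sublevel hNsmul hr] at hBM
    have hBM' := ENNReal.toReal_mono (by finiteness) hBM
    rw [ENNReal.toReal_pow, ENNReal.toReal_mul, ENNReal.toReal_mul,
      ENNReal.toReal_ofReal (by positivity)] at hBM'
    refine le_exp_mul_of_mul_le hVreal ENNReal.toReal_nonneg ?_ ?_ (hδnonneg _) hD1 hBM'
    · have := ENNReal.toReal_mono (ENNReal.div_ne_top hAtop hV0) hAhalf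
      rw [ENNReal.toReal_div, ENNReal.toReal_div, le_div_iff₀ hVreal] at this
      simp at this
      linarith
    · rw [← ENNReal.toReal_add hAtop hBtop]
      exact ENNReal.toReal_mono hVtop hsum
  rw [conicalMeasure, ENNReal.le_div_iff_mul_le (.inl hV0) (.inl hVtop)]
  refine ENNReal.le_of_add_le_add_right hBtop (le_trans ?_ hcover)
  have hexp1 : Real.exp (-D * n) ≤ 1 :=
    Real.exp_le_one_iff.2 (by nlinarith [hδnonneg (ε / 8 - thetaGM n), n.cast_nonneg (α := ℝ)])
  rw [← ENNReal.toReal_le_toReal (by finiteness) hVtop, ENNReal.toReal_add (by finiteness) hBtop,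
    ENNReal.toReal_mul, ENNReal.toReal_ofReal (by linarith)]
  linarith
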